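/- Let μ₁, μ₂ > 0, 0 ≤ μ₃ < min(μ₁, μ₂), set ρ = μ₃/√(μ₁ μ₂), and let G₁, G₂: ℕ → ℝ satisfy ∑_{x=0}^∞ p(x; μᵢ) Gᵢ(x)² < ∞ for i = 1, 2. Let k* ≥ 1 be an integer such that c_{G₁}(k; μ₁) c_{G₂}(k; μ₂) = 0 for every integer k with 1 ≤ k < k*. Then |Cov(G₁, G₂)| ≤ ρ^{k*} √(Var₁(G₁) Var₂(G₂)), where Cov(G₁, G₂) = ∑_{x,y} p(x, y; μ₁, μ₂, μ₃) G₁(x) G₂(y) − (∑_x p(x; μ₁) G₁(x)) (∑_y p(y; μ₂) G₂(y)) and Varᵢ(Gᵢ) = ∑_x p(x; μᵢ) Gᵢ(x)² − (∑_x p(x; μᵢ) Gᵢ(x))². -/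

import Mathlib

/-! The normalised Charlier polynomials `P_k / √(k! μ^k)` form a Hilbert basis of `L²(p(·; μ))`.
Orthogonality follows from summation by parts, `E[P_{k+1} g] = μ E[P_k Δg]`
(`tsum_charlier_succ`), and `ΔP_{k+1} = (k + 1) P_k` (`charlier_diff`). Completeness
(`eq_zero_of_orthogonal`) holds because a function orthogonal to all polynomials has vanishing
factorial moments, and these determine it by binomial inversion; together they give `parseval`.

Under the bivariate Poisson law conditional expectation is diagonal in these bases:
`E[P_k(Y; μ₂) | X] = (μ₃ / μ₁)^k P_k(X; μ₁)` (`tsum_poissonPMF₂_mul_charlier`), obtained by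
matching the recurrence `P_{k+1}(y) = y P_k(y - 1) - μ₂ P_k(y)` with the one satisfied by the
bivariate mass function. With normalised coefficients `a_k` of `G₁` and `b_k` of `G₂` this yields
`E[G₁(X) G₂(Y)] = ∑ ρ^k a_k b_k` (`hasSum_poissonPMF₂`).

The term `k = 0` is the product of the means, the terms `1 ≤ k < k*` vanish by hypothesis, and
`ρ^k ≤ ρ^{k*}` in the rest since `ρ ≤ 1`. The Cauchy-Schwarz inequality and
`Var Gᵢ = ∑_{k ≥ 1}` of the squared coefficients (`hasSum_variance`) finish the proof. -/

open scoped BigOperators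
open MeasureTheory Filter Topology

/-- Charlier polynomial `P_k(x; μ)`. -/
noncomputable def charlier (μ : ℝ) (k x : ℕ) : ℝ :=
  ∑ j ∈ Finset.range (k + 1),
    (k.choose j : ℝ) * (-μ) ^ (k - j) * (x.descFactorial j : ℝ)

/-- Poisson probability mass function `p(x; μ)`. -/
noncomputable def poissonPMF (μ : ℝ) (x : ℕ) : ℝ :=
  Real.exp (-μ) * μ ^ x / (x.factorial : ℝ)

/-- Backward difference operator `D₋`. -/
def Dminus (g : ℕ → ℝ) : ℕ → ℝ :=
  fun x => g x - if x = 0 then 0 else g (x - 1)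

/-- Forward difference operator `D₊`. -/
def Dplus (g : ℕ → ℝ) : ℕ → ℝ :=
  fun x => g (x + 1) - g x

/-- Bivariate Poisson probability mass function `p(x, y; μ₁, μ₂, μ₃)`. -/
noncomputable def poissonPMF₂ (μ₁ μ₂ μ₃ : ℝ) (x y : ℕ) : ℝ :=
  ∑ j ∈ Finset.range (min x y + 1),
    poissonPMF (μ₁ - μ₃) (x - j) * poissonPMF (μ₂ - μ₃) (y - j) * poissonPMF μ₃ j

/-- Charlier coefficient `c_G(k; μ)`. -/
noncomputable def charlierCoeff (μ : ℝ) (G : ℕ → ℝ) (k : ℕ) : ℝ :=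
  (μ ^ k)⁻¹ * ∑' x : ℕ, poissonPMF μ x * G x * charlier μ k x

/-! ### Algebra of Charlier polynomials -/

/-- The raising operator `(S f)(x) = x f(x - 1)`. Its iterates on the constant `1` are the falling
factorials, so that `P_k = (S - μ)^k 1`. At `x = 0` the truncated `f (0 - 1)` is multiplied by
`0`. -/
def raiseOp : Module.End ℝ (ℕ → ℝ) where
  toFun f x := (x : ℝ) * f (x - 1)
  map_add' f g := by ext x; simp [mul_add]
  map_smul' c f := by ext x; simp; ring

lemma raiseOp_pow_one (j x : ℕ) : (raiseOp ^ j) 1 x = (x.descFactorial j : ℝ) := by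
  induction j generalizing x with
  | zero => simp
  | succ j ih =>
    rw [pow_succ', Module.End.mul_apply]
    change (x : ℝ) * (raiseOp ^ j) 1 (x - 1) = _
    rw [ih]
    cases x with
    | zero => simp
    | succ x => rw [Nat.succ_descFactorial_succ, Nat.add_sub_cancel]; push_cast; rfl

lemma add_algebraMap_pow_one (A : Module.End ℝ (ℕ → ℝ)) (c : ℝ) (k x : ℕ) :
    ((A + algebraMap ℝ _ c) ^ k) 1 x
      = ∑ j ∈ Finset.range (k + 1), (k.choose j : ℝ) * c ^ (k - j) * (A ^ j) 1 x := by
  rw [(Algebra.commute_algebraMap_right c A).add_pow, LinearMap.sum_apply, Finset.sum_apply]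
  refine Finset.sum_congr rfl fun j _ => ?_
  rw [← map_natCast (algebraMap ℝ (Module.End ℝ (ℕ → ℝ))), ← map_pow, mul_assoc, ← map_mul,
    ← Algebra.commutes, Module.End.mul_apply, Module.algebraMap_end_apply, Pi.smul_apply,
    smul_eq_mul, mul_comm (c ^ _)]

lemma charlier_eq_pow (μ : ℝ) (k : ℕ) :
    charlier μ k = ((raiseOp + algebraMap ℝ _ (-μ)) ^ k) 1 := by
  ext x
  simp only [add_algebraMap_pow_one, raiseOp_pow_one, charlier]

lemma charlier_zero (μ : ℝ) (x : ℕ) : charlier μ 0 x = 1 := by simp [charlier]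

/-- The identity `P_{k+1} = (S - μ) P_k`. -/
lemma charlier_succ (μ : ℝ) (k x : ℕ) :
    charlier μ (k + 1) x = x * charlier μ k (x - 1) - μ * charlier μ k x := by
  rw [charlier_eq_pow, charlier_eq_pow, pow_succ', Module.End.mul_apply]
  simp [raiseOp, Module.algebraMap_end_apply]
  ring

/-- Expanding `S^k = ((S - μ) + μ)^k` inverts the definition of the Charlier polynomials. -/
lemma descFactorial_eq_sum_charlier (μ : ℝ) (k x : ℕ) :
    (x.descFactorial k : ℝ)
      = ∑ j ∈ Finset.range (k + 1), (k.choose j : ℝ) * μ ^ (k - j) * charlier μ j x := by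
  have h : (raiseOp : Module.End ℝ (ℕ → ℝ))
      = (raiseOp + algebraMap ℝ _ (-μ)) + algebraMap ℝ _ μ := by
    simp
  rw [← raiseOp_pow_one, h, add_algebraMap_pow_one]
  simp only [charlier_eq_pow]

lemma charlier_diff (μ : ℝ) (k x : ℕ) :
    charlier μ (k + 1) (x + 1) - charlier μ (k + 1) x = (k + 1) * charlier μ k x := by
  induction k generalizing x with
  | zero => simp [charlier_succ, charlier_zero]
  | succ k ih =>
    rw [charlier_succ μ (k + 1) (x + 1), charlier_succ μ (k + 1) x, Nat.add_sub_cancel]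
    have h1 := ih x
    have h2 := charlier_succ μ k x
    cases x with
    | zero =>
      simp only [Nat.cast_zero, zero_mul, zero_add, Nat.cast_succ] at *
      linear_combination (-μ) * h1 - ((k : ℝ) + 1) * h2
    | succ x =>
      have h3 := ih x
      simp only [Nat.add_sub_cancel, Nat.cast_succ] at *
      linear_combination (-μ) * h1 - ((k : ℝ) + 1) * h2 + ((x : ℝ) + 1) * h3

lemma descFactorial_le (x j : ℕ) : (x.descFactorial j : ℝ) ≤ j.factorial * 2 ^ x := by
  rw [Nat.descFactorial_eq_factorial_mul_choose]
  exact_mod_cast Nat.mul_le_mul_left _ (Nat.choose_le_two_pow x j)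

lemma exists_abs_charlier_le (μ : ℝ) (k : ℕ) :
    ∃ C : ℝ, ∀ x : ℕ, |charlier μ k x| ≤ C * 2 ^ x := by
  refine ⟨∑ j ∈ Finset.range (k + 1), (k.choose j : ℝ) * |μ| ^ (k - j) * j.factorial,
    fun x => ?_⟩
  rw [Finset.sum_mul]
  refine (Finset.abs_sum_le_sum_abs _ _).trans (Finset.sum_le_sum fun j _ => ?_)
  rw [abs_mul, abs_mul, abs_pow, abs_neg, Nat.abs_cast, Nat.abs_cast, mul_assoc _ (j.factorial : ℝ)]
  gcongr
  exact descFactorial_le x j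

/-! ### Square-summability against the Poisson weight -/

lemma poissonPMF_nonneg {μ : ℝ} (hμ : 0 ≤ μ) (x : ℕ) : 0 ≤ poissonPMF μ x := by
  unfold poissonPMF; positivity

lemma poissonPMF_pos {μ : ℝ} (hμ : 0 < μ) (x : ℕ) : 0 < poissonPMF μ x := by
  unfold poissonPMF; positivity

lemma poissonPMF_succ (μ : ℝ) (x : ℕ) :
    ((x : ℝ) + 1) * poissonPMF μ (x + 1) = μ * poissonPMF μ x := by
  have : (x.factorial : ℝ) ≠ 0 := by positivity
  have : (x : ℝ) + 1 ≠ 0 := by positivity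
  simp only [poissonPMF, Nat.factorial_succ, Nat.cast_mul, Nat.cast_succ]
  field_simp
  ring

lemma poissonPMF_hasSum (μ : ℝ) : HasSum (poissonPMF μ) 1 := by
  have h := (NormedSpace.expSeries_div_hasSum_exp μ).mul_left (Real.exp (-μ))
  rw [← Real.exp_eq_exp_ℝ, ← Real.exp_add, neg_add_cancel, Real.exp_zero] at h
  have e : poissonPMF μ = fun x : ℕ => Real.exp (-μ) * (μ ^ x / (x.factorial : ℝ)) :=
    funext fun x => mul_div_assoc _ _ _
  rwa [e]

lemma summable_poissonPMF_mul_pow (μ c : ℝ) : Summable fun x => poissonPMF μ x * c ^ x := by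
  refine ((Real.summable_pow_div_factorial (μ * c)).mul_left (Real.exp (-μ))).congr fun x => ?_
  rw [poissonPMF, mul_pow]; ring

/-- The weighted `ℓ²` condition `∑ p(x; μ) G(x)² < ∞`. -/
def SqSum (μ : ℝ) (G : ℕ → ℝ) : Prop := Summable fun x => poissonPMF μ x * G x ^ 2

lemma SqSum.of_abs_le {μ C c : ℝ} (hμ : 0 ≤ μ) {G : ℕ → ℝ} (h : ∀ x, |G x| ≤ C * c ^ x) :
    SqSum μ G := by
  refine Summable.of_nonneg_of_le
    (fun x => mul_nonneg (poissonPMF_nonneg hμ x) (sq_nonneg _)) (fun x => ?_)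
    ((summable_poissonPMF_mul_pow μ (c ^ 2)).mul_left (C ^ 2))
  have h1 : G x ^ 2 ≤ (C * c ^ x) ^ 2 := sq_le_sq' (abs_le.1 (h x)).1 (abs_le.1 (h x)).2
  calc poissonPMF μ x * G x ^ 2 ≤ poissonPMF μ x * (C * c ^ x) ^ 2 :=
        mul_le_mul_of_nonneg_left h1 (poissonPMF_nonneg hμ x)
    _ = C ^ 2 * (poissonPMF μ x * (c ^ 2) ^ x) := by rw [mul_pow, ← pow_mul, ← pow_mul,
        mul_comm x 2, mul_left_comm]

lemma sqSum_charlier {μ : ℝ} (hμ : 0 ≤ μ) (ν : ℝ) (k : ℕ) : SqSum μ (charlier ν k) :=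
  let ⟨_, hC⟩ := exists_abs_charlier_le ν k
  SqSum.of_abs_le hμ hC

lemma SqSum.mul {μ : ℝ} (hμ : 0 ≤ μ) {F G : ℕ → ℝ} (hF : SqSum μ F) (hG : SqSum μ G) :
    Summable fun x => poissonPMF μ x * F x * G x := by
  refine Summable.of_norm_bounded (hF.add hG) fun x => ?_
  have h := poissonPMF_nonneg hμ x
  rw [Real.norm_eq_abs, mul_assoc, abs_mul, abs_of_nonneg h, ← mul_add]
  refine mul_le_mul_of_nonneg_left ?_ h
  rw [abs_le]
  constructor <;> nlinarith [sq_nonneg (F x + G x), sq_nonneg (F x - G x), sq_nonneg (F x),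
    sq_nonneg (G x)]

/-! ### Orthogonality and completeness of the Charlier polynomials -/

/-- Summation by parts for the Poisson weight: `E[P_{k+1} g] = μ E[P_k Δg]`. -/
lemma tsum_charlier_succ {μ : ℝ} (k : ℕ) {g : ℕ → ℝ}
    (h₁ : Summable fun x => poissonPMF μ x * charlier μ k x * g x)
    (h₂ : Summable fun x => poissonPMF μ x * charlier μ k x * g (x + 1)) :
    ∑' x, poissonPMF μ x * charlier μ (k + 1) x * g x
      = μ * ∑' x, poissonPMF μ x * charlier μ k x * (g (x + 1) - g x) := by
  have e : ∀ x : ℕ, poissonPMF μ (x + 1) * ((x + 1 : ℕ) : ℝ) * charlier μ k (x + 1 - 1) * g (x + 1)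
      = μ * (poissonPMF μ x * charlier μ k x * g (x + 1)) := fun x => by
    have := poissonPMF_succ μ x
    push_cast [Nat.add_sub_cancel]
    linear_combination charlier μ k x * g (x + 1) * this
  have s : Summable fun x : ℕ => poissonPMF μ x * (x : ℝ) * charlier μ k (x - 1) * g x := by
    rw [← summable_nat_add_iff 1]
    exact (h₂.mul_left μ).congr fun x => (e x).symm
  calc _ = ∑' x : ℕ, (poissonPMF μ x * (x : ℝ) * charlier μ k (x - 1) * g x
        - μ * (poissonPMF μ x * charlier μ k x * g x)) :=
        tsum_congr fun x => by rw [charlier_succ]; ring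
    _ = (∑' x : ℕ, poissonPMF μ x * (x : ℝ) * charlier μ k (x - 1) * g x)
        - μ * ∑' x, poissonPMF μ x * charlier μ k x * g x := by
        rw [s.tsum_sub (h₁.mul_left μ), tsum_mul_left]
    _ = _ := by
        rw [s.tsum_eq_zero_add, tsum_congr e, tsum_mul_left]
        simp only [mul_sub, h₂.tsum_sub h₁]
        simp

lemma summable_charlier_mul {μ : ℝ} (hμ : 0 ≤ μ) (k l : ℕ) :
    Summable fun x => poissonPMF μ x * charlier μ k x * charlier μ l x :=
  SqSum.mul hμ (sqSum_charlier hμ μ k) (sqSum_charlier hμ μ l)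

lemma sqSum_charlier_shift {μ : ℝ} (hμ : 0 ≤ μ) (k : ℕ) :
    SqSum μ fun x => charlier μ k (x + 1) := by
  obtain ⟨C, hC⟩ := exists_abs_charlier_le μ k
  exact SqSum.of_abs_le (C := C * 2) (c := 2) hμ fun x => (hC (x + 1)).trans_eq (by ring)

lemma tsum_charlier_succ_succ {μ : ℝ} (hμ : 0 ≤ μ) (k l : ℕ) :
    ∑' x, poissonPMF μ x * charlier μ (k + 1) x * charlier μ (l + 1) x
      = μ * (l + 1) * ∑' x, poissonPMF μ x * charlier μ k x * charlier μ l x := by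
  rw [tsum_charlier_succ k (summable_charlier_mul hμ _ _)
    (SqSum.mul hμ (sqSum_charlier hμ μ k) (sqSum_charlier_shift hμ _)), mul_assoc]
  congr 1
  rw [← tsum_mul_left (L := SummationFilter.unconditional ℕ)]
  refine tsum_congr fun x => ?_
  rw [charlier_diff]; ring

lemma tsum_charlier_succ_zero {μ : ℝ} (hμ : 0 ≤ μ) (k : ℕ) :
    ∑' x, poissonPMF μ x * charlier μ (k + 1) x * charlier μ 0 x = 0 := by
  rw [tsum_charlier_succ k (summable_charlier_mul hμ _ _)
    (SqSum.mul hμ (sqSum_charlier hμ μ k) (sqSum_charlier_shift hμ _))]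
  simp [charlier_zero]

lemma tsum_charlier_mul_charlier {μ : ℝ} (hμ : 0 ≤ μ) (k l : ℕ) :
    ∑' x, poissonPMF μ x * charlier μ k x * charlier μ l x
      = if k = l then k.factorial * μ ^ k else 0 := by
  induction k generalizing l with
  | zero =>
    cases l with
    | zero => simp [charlier_zero, (poissonPMF_hasSum μ).tsum_eq]
    | succ l =>
      rw [if_neg (by omega), ← tsum_charlier_succ_zero hμ l]
      exact tsum_congr fun x => by ring
  | succ k ih =>
    cases l with
    | zero => rw [if_neg (by omega), tsum_charlier_succ_zero hμ]
    | succ l =>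
      rw [tsum_charlier_succ_succ hμ, ih]
      by_cases h : k = l
      · subst h; simp [Nat.factorial_succ, pow_succ]; ring
      · simp [h]

lemma sum_choose_mul_choose (x n : ℕ) :
    ∑ j ∈ Finset.range (x + 1), (-1 : ℝ) ^ j * (x.choose j * j.choose n)
      = if x = n then (-1) ^ n else 0 := by
  rcases lt_or_ge x n with h | h
  · rw [if_neg (by omega)]
    refine Finset.sum_eq_zero fun j hj => ?_
    rw [Nat.choose_eq_zero_of_lt (show j < n by simp at hj; omega)]; simp
  obtain ⟨m, rfl⟩ := Nat.exists_eq_add_of_le h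
  rw [add_assoc, Finset.sum_range_add, Finset.sum_eq_zero, zero_add]
  · have h2 := congrArg (fun z : ℤ => (z : ℝ)) (Int.alternating_sum_range_choose (n := m))
    push_cast at h2
    have h3 : ∀ i ∈ Finset.range (m + 1),
        (-1 : ℝ) ^ (n + i) * ((n + m).choose (n + i) * (n + i).choose n)
        = ((-1) ^ n * (n + m).choose n) * ((-1) ^ i * m.choose i) := fun i _ => by
      have := Nat.choose_mul (n := n + m) (k := n + i) (s := n) (by omega)
      rw [Nat.add_sub_cancel_left, Nat.add_sub_cancel_left] at this
      rw [← Nat.cast_mul, this, pow_add]; push_cast; ring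
    rw [Finset.sum_congr rfl h3, ← Finset.mul_sum, h2]
    by_cases hm : m = 0
    · simp [hm]
    · simp [hm]
  · intro j hj
    rw [Nat.choose_eq_zero_of_lt (show j < n by simpa using hj)]; simp

/-- A sequence with vanishing factorial moments is zero, by binomial inversion
`a n = ∑ⱼ (-1)^(j-n) C(j, n) ∑ₓ a x C(x, j)`. The weight `3^x = ∑ⱼ C(x, j) 2^j` bounds
`∑ⱼ C(x, j) C(j, n)` and so licenses the exchange of sums. -/
lemma eq_zero_of_moments {a : ℕ → ℝ} (ha : Summable fun x => |a x| * 3 ^ x)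
    (h : ∀ j : ℕ, ∑' x, a x * (x.choose j : ℝ) = 0) (n : ℕ) : a n = 0 := by
  let f : ℕ → ℕ → ℝ := fun x j => a x * ((-1 : ℝ) ^ j * (x.choose j * j.choose n))
  have hfin : ∀ x j, j ∉ Finset.range (x + 1) → f x j = 0 := fun x j hj => by
    simp only [f]
    rw [Nat.choose_eq_zero_of_lt (show x < j by simp at hj; omega)]; simp
  have hs : Summable (Function.uncurry f) := by
    rw [← summable_norm_iff, summable_prod_of_nonneg (fun _ => norm_nonneg _)]
    constructor
    · intro x
      exact summable_of_ne_finset_zero (s := Finset.range (x + 1)) fun j hj => by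
        simp [Function.uncurry, hfin x j hj]
    · refine Summable.of_nonneg_of_le (fun x => tsum_nonneg fun _ => norm_nonneg _)
        (fun x => ?_) ha
      rw [tsum_eq_sum (s := Finset.range (x + 1)) fun j hj => by
        simp [Function.uncurry, hfin x j hj]]
      have h3 : (3 : ℝ) ^ x = ∑ j ∈ Finset.range (x + 1), (x.choose j : ℝ) * 2 ^ j := by
        have := add_pow (2 : ℝ) 1 x
        norm_num at this
        rw [this]
        exact Finset.sum_congr rfl fun _ _ => mul_comm _ _
      rw [h3, Finset.mul_sum]
      refine Finset.sum_le_sum fun j _ => ?_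
      simp only [Function.uncurry, f, Real.norm_eq_abs, abs_mul, abs_pow, abs_neg, abs_one,
        one_pow, one_mul, Nat.abs_cast]
      gcongr
      exact_mod_cast Nat.choose_le_two_pow j n
  have hc := hs.tsum_comm
  have h1 : ∀ j, ∑' x, f x j = 0 := fun j => by
    calc ∑' x, f x j = ∑' x, ((-1 : ℝ) ^ j * j.choose n) * (a x * (x.choose j : ℝ)) :=
          tsum_congr fun x => by simp only [f]; ring
      _ = 0 := by rw [tsum_mul_left, h, mul_zero]
  have h2 : ∀ x, ∑' j, f x j = if x = n then a n * (-1) ^ n else 0 := fun x => by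
    rw [tsum_eq_sum (hfin x)]
    simp only [f]
    rw [← Finset.mul_sum, sum_choose_mul_choose]
    split_ifs with hx
    · rw [hx]
    · simp
  simp only [h1, h2, tsum_zero, tsum_ite_eq] at hc
  simpa using hc.symm

/-- Completeness: only the zero function of `L²(p(·; μ))` is orthogonal to all Charlier
polynomials. -/
lemma eq_zero_of_orthogonal {μ : ℝ} (hμ : 0 < μ) {G : ℕ → ℝ} (hG : SqSum μ G)
    (h : ∀ k, ∑' x, poissonPMF μ x * charlier μ k x * G x = 0) (n : ℕ) : G n = 0 := by
  have ha : Summable fun x => |poissonPMF μ x * G x| * 3 ^ x := by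
    have h3 : SqSum μ fun x => (3 : ℝ) ^ x :=
      SqSum.of_abs_le (C := 1) (c := 3) hμ.le fun x => by simp
    refine (SqSum.mul hμ.le hG h3).abs.congr fun x => ?_
    rw [abs_mul, abs_of_nonneg (by positivity : (0 : ℝ) ≤ 3 ^ x)]
  have hn := eq_zero_of_moments ha (fun j => ?_) n
  · exact (mul_eq_zero.1 hn).resolve_left (poissonPMF_pos hμ n).ne'
  have hj : (j.factorial : ℝ) ≠ 0 := by positivity
  have e : ∀ x, poissonPMF μ x * G x * (x.choose j : ℝ) = (j.factorial : ℝ)⁻¹ *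
      ∑ i ∈ Finset.range (j + 1), (j.choose i : ℝ) * μ ^ (j - i) *
        (poissonPMF μ x * charlier μ i x * G x) := fun x => by
    have h1 := descFactorial_eq_sum_charlier μ j x
    rw [Nat.descFactorial_eq_factorial_mul_choose, Nat.cast_mul] at h1
    rw [eq_inv_mul_iff_mul_eq₀ hj]
    calc _ = poissonPMF μ x * G x * ((j.factorial : ℝ) * x.choose j) := by ring
      _ = _ := by
        rw [h1, Finset.mul_sum]
        exact Finset.sum_congr rfl fun i _ => by ring
  rw [tsum_congr e, tsum_mul_left, Summable.tsum_finsetSum fun i _ =>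
    (SqSum.mul hμ.le (sqSum_charlier hμ.le μ i) hG).mul_left _]
  simp [tsum_mul_left, h]

/-- The coefficient of `G` along the `L²`-normalised Charlier polynomial `P_k / √(k! μ^k)`. -/
noncomputable def normCoeff (μ : ℝ) (G : ℕ → ℝ) (k : ℕ) : ℝ :=
  (∑' x, poissonPMF μ x * G x * charlier μ k x) / √(k.factorial * μ ^ k)

/-- The isometry `L²(p(·; μ)) → ℓ²`, `G ↦ √p · G`. -/
noncomputable def toEll2 {μ : ℝ} (hμ : 0 ≤ μ) (G : ℕ → ℝ) (hG : SqSum μ G) :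
    lp (fun _ : ℕ => ℝ) 2 :=
  ⟨fun x => √(poissonPMF μ x) * G x, memℓp_gen (by
    refine hG.congr fun x => ?_
    have := Real.sq_sqrt (poissonPMF_nonneg hμ x)
    simp only [ENNReal.toReal_ofNat, Real.rpow_ofNat, Real.norm_eq_abs, sq_abs, mul_pow, this])⟩

lemma inner_toEll2 {μ : ℝ} (hμ : 0 ≤ μ) {F G : ℕ → ℝ} (hF : SqSum μ F) (hG : SqSum μ G) :
    inner ℝ (toEll2 hμ F hF) (toEll2 hμ G hG) = ∑' x, poissonPMF μ x * F x * G x := by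
  rw [lp.inner_eq_tsum]
  refine tsum_congr fun x => ?_
  have := Real.mul_self_sqrt (poissonPMF_nonneg hμ x)
  simp only [toEll2, RCLike.inner_apply, conj_trivial]
  linear_combination F x * G x * this

/-- Parseval's identity: the normalised Charlier polynomials form a Hilbert basis. -/
lemma parseval {μ : ℝ} (hμ : 0 < μ) {F G : ℕ → ℝ} (hF : SqSum μ F) (hG : SqSum μ G) :
    HasSum (fun k => normCoeff μ F k * normCoeff μ G k) (∑' x, poissonPMF μ x * F x * G x) := by
  have hP : ∀ k, SqSum μ (charlier μ k) := sqSum_charlier hμ.le μ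
  have hpos : ∀ k : ℕ, 0 < (k.factorial : ℝ) * μ ^ k := fun k => by positivity
  let e : ℕ → lp (fun _ : ℕ => ℝ) 2 := fun k =>
    (√(k.factorial * μ ^ k))⁻¹ • toEll2 hμ.le (charlier μ k) (hP k)
  have he : Orthonormal ℝ e := by
    rw [orthonormal_iff_ite]
    intro k l
    simp only [e]
    rw [real_inner_smul_left, real_inner_smul_right, inner_toEll2, tsum_charlier_mul_charlier hμ.le]
    by_cases h : k = l
    · subst h
      have h1 := Real.mul_self_sqrt (hpos k).le
      have h2 := (Real.sqrt_pos.2 (hpos k)).ne'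
      rw [if_pos rfl, if_pos rfl]
      field_simp
      linear_combination -h1
    · simp [h]
  have hl : ∀ {H : ℕ → ℝ} (hH : SqSum μ H) k,
      inner ℝ (e k) (toEll2 hμ.le H hH) = normCoeff μ H k := fun hH k => by
    simp only [e]
    rw [real_inner_smul_left, inner_toEll2, normCoeff, div_eq_inv_mul]
    congr 1
    exact tsum_congr fun x => by ring
  have hc : (Submodule.span ℝ (Set.range e))ᗮ = ⊥ := by
    rw [eq_bot_iff]
    intro v hv
    have hp : ∀ x, √(poissonPMF μ x) ≠ 0 := fun x => (Real.sqrt_pos.2 (poissonPMF_pos hμ x)).ne'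
    let H : ℕ → ℝ := fun x => v x / √(poissonPMF μ x)
    have hH : SqSum μ H := by
      have h2 := (memℓp_gen_iff (by norm_num)).1 (lp.memℓp v)
      refine h2.congr fun x => ?_
      have := Real.sq_sqrt (poissonPMF_pos hμ x).le
      simp only [H, ENNReal.toReal_ofNat, Real.rpow_ofNat, Real.norm_eq_abs, sq_abs, div_pow, this]
      have := (poissonPMF_pos hμ x).ne'
      field_simp
    have hv2 : v = toEll2 hμ.le H hH := by
      ext x
      simp only [toEll2, H]
      rw [mul_div_cancel₀ _ (hp x)]
    have h0 : ∀ x, H x = 0 := eq_zero_of_orthogonal hμ hH fun k => by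
      have h1 := (Submodule.mem_orthogonal _ _).1 hv (e k) (Submodule.subset_span ⟨k, rfl⟩)
      rw [hv2] at h1
      simp only [e] at h1
      rw [real_inner_smul_left, inner_toEll2] at h1
      exact (mul_eq_zero.1 h1).resolve_left (inv_ne_zero (Real.sqrt_pos.2 (hpos k)).ne')
    rw [Submodule.mem_bot, hv2]
    ext x
    simp [toEll2, h0]
  have hb := (HilbertBasis.mkOfOrthogonalEqBot he hc).hasSum_inner_mul_inner
    (toEll2 hμ.le F hF) (toEll2 hμ.le G hG)
  rw [HilbertBasis.coe_mkOfOrthogonalEqBot, inner_toEll2] at hb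
  simp only [hl] at hb
  have hfun : (fun k => normCoeff μ F k * normCoeff μ G k)
      = fun k => inner ℝ (toEll2 hμ.le F hF) (e k) * normCoeff μ G k := by
    ext k
    rw [real_inner_comm, hl]
  rwa [hfun]

/-! ### The bivariate Poisson law -/

lemma poissonPMF₂_comm (μ₁ μ₂ μ₃ : ℝ) (x y : ℕ) :
    poissonPMF₂ μ₁ μ₂ μ₃ x y = poissonPMF₂ μ₂ μ₁ μ₃ y x := by
  simp only [poissonPMF₂, min_comm x y]
  exact Finset.sum_congr rfl fun j _ => by ring

lemma poissonPMF₂_nonneg {μ₁ μ₂ μ₃ : ℝ} (h₁ : μ₃ ≤ μ₁) (h₂ : μ₃ ≤ μ₂) (h₃ : 0 ≤ μ₃) (x y : ℕ) :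
    0 ≤ poissonPMF₂ μ₁ μ₂ μ₃ x y :=
  Finset.sum_nonneg fun j _ => mul_nonneg (mul_nonneg (poissonPMF_nonneg (by linarith) _)
    (poissonPMF_nonneg (by linarith) _)) (poissonPMF_nonneg h₃ _)

/-- `p(y - j; c)`, extended by zero to `y < j`. -/
noncomputable def shiftPMF (c : ℝ) (y j : ℕ) : ℝ := if j ≤ y then poissonPMF c (y - j) else 0

lemma shiftPMF_succ (c : ℝ) (y j : ℕ) :
    ((y : ℝ) + 1) * shiftPMF c (y + 1) j = c * shiftPMF c y j + j * shiftPMF c (y + 1) j := by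
  unfold shiftPMF
  rcases lt_trichotomy j (y + 1) with h | h | h
  · obtain ⟨d, rfl⟩ := Nat.exists_eq_add_of_le (Nat.lt_succ_iff.1 h)
    have := poissonPMF_succ c d
    rw [if_pos (by omega), if_pos (by omega), show j + d + 1 - j = d + 1 by omega,
      Nat.add_sub_cancel_left]
    push_cast
    linear_combination this
  · subst h; simp
  · rw [if_neg (by omega), if_neg (by omega)]; simp

lemma shiftPMF_succ_succ (c : ℝ) (y j : ℕ) : shiftPMF c (y + 1) (j + 1) = shiftPMF c y j := by
  simp [shiftPMF]

lemma shiftPMF_hasSum (c : ℝ) (j : ℕ) : HasSum (fun y => shiftPMF c y j) 1 := by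
  rw [← hasSum_nat_add_iff' j, Finset.sum_eq_zero, sub_zero]
  · have e : (fun y => shiftPMF c (y + j) j) = poissonPMF c := by ext y; simp [shiftPMF]
    rw [e]
    exact poissonPMF_hasSum c
  · intro y hy
    exact if_neg (by simpa using hy)

lemma poissonPMF₂_eq (μ₁ μ₂ μ₃ : ℝ) (x y : ℕ) :
    poissonPMF₂ μ₁ μ₂ μ₃ x y = ∑ j ∈ Finset.range (x + 1),
      poissonPMF (μ₁ - μ₃) (x - j) * poissonPMF μ₃ j * shiftPMF (μ₂ - μ₃) y j := by
  have hsub : Finset.range (min x y + 1) ⊆ Finset.range (x + 1) := by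
    intro j; simp; omega
  rw [poissonPMF₂, ← Finset.sum_subset hsub]
  · refine Finset.sum_congr rfl fun j hj => ?_
    rw [shiftPMF, if_pos (by simp at hj; omega)]; ring
  · intro j hj hj'
    rw [shiftPMF, if_neg (by simp at hj hj'; omega), mul_zero]

lemma sum_poissonPMF_mul (a b : ℝ) (x : ℕ) :
    ∑ j ∈ Finset.range (x + 1), poissonPMF a (x - j) * poissonPMF b j = poissonPMF (a + b) x := by
  rw [poissonPMF, add_comm a b, add_pow, Finset.mul_sum, Finset.sum_div]
  refine Finset.sum_congr rfl fun j hj => ?_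
  have hj : j ≤ x := by simp at hj; omega
  rw [Nat.cast_choose ℝ hj, neg_add, Real.exp_add, poissonPMF, poissonPMF]
  have h1 : (x.factorial : ℝ) ≠ 0 := by positivity
  have h2 : (j.factorial : ℝ) ≠ 0 := by positivity
  have h3 : ((x - j).factorial : ℝ) ≠ 0 := by positivity
  field_simp

lemma poissonPMF₂_hasSum (μ₁ μ₂ μ₃ : ℝ) (x : ℕ) :
    HasSum (fun y => poissonPMF₂ μ₁ μ₂ μ₃ x y) (poissonPMF μ₁ x) := by
  simp only [poissonPMF₂_eq]
  have h := hasSum_sum fun j (_ : j ∈ Finset.range (x + 1)) =>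
    (shiftPMF_hasSum (μ₂ - μ₃) j).mul_left (poissonPMF (μ₁ - μ₃) (x - j) * poissonPMF μ₃ j)
  simpa [sum_poissonPMF_mul] using h

lemma poissonPMF₂_hasSum' (μ₁ μ₂ μ₃ : ℝ) (y : ℕ) :
    HasSum (fun x => poissonPMF₂ μ₁ μ₂ μ₃ x y) (poissonPMF μ₂ y) := by
  simpa only [poissonPMF₂_comm μ₁] using poissonPMF₂_hasSum μ₂ μ₁ μ₃ y

/-- The recurrence in `y` of the bivariate law, where the mass at `(x - 1, y)` counts as `0` for
`x = 0`. It matches the term `y P_k(y - 1)` of the Charlier recurrence. -/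
lemma poissonPMF₂_succ (μ₁ μ₂ μ₃ : ℝ) (x y : ℕ) :
    ((y : ℝ) + 1) * poissonPMF₂ μ₁ μ₂ μ₃ x (y + 1)
      = (μ₂ - μ₃) * poissonPMF₂ μ₁ μ₂ μ₃ x y
        + μ₃ * if x = 0 then 0 else poissonPMF₂ μ₁ μ₂ μ₃ (x - 1) y := by
  have h : ∑ j ∈ Finset.range (x + 1), poissonPMF (μ₁ - μ₃) (x - j) * poissonPMF μ₃ j *
      ((j : ℝ) * shiftPMF (μ₂ - μ₃) (y + 1) j)
      = μ₃ * if x = 0 then 0 else poissonPMF₂ μ₁ μ₂ μ₃ (x - 1) y := by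
    rw [Finset.sum_range_succ']
    cases x with
    | zero => simp
    | succ x =>
      simp only [Nat.cast_zero, zero_mul, mul_zero, add_zero, shiftPMF_succ_succ,
        Nat.add_sub_cancel, if_neg (Nat.succ_ne_zero x), poissonPMF₂_eq, Finset.mul_sum]
      refine Finset.sum_congr rfl fun j _ => ?_
      have := poissonPMF_succ μ₃ j
      rw [Nat.add_sub_add_right]
      push_cast
      linear_combination poissonPMF (μ₁ - μ₃) (x - j) * shiftPMF (μ₂ - μ₃) y j * this
  rw [← h, poissonPMF₂_eq, poissonPMF₂_eq, Finset.mul_sum, Finset.mul_sum,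
    ← Finset.sum_add_distrib]
  refine Finset.sum_congr rfl fun j _ => ?_
  linear_combination poissonPMF (μ₁ - μ₃) (x - j) * poissonPMF μ₃ j *
    shiftPMF_succ (μ₂ - μ₃) y j

lemma summable_poissonPMF₂_sq {μ₁ μ₂ μ₃ : ℝ} (h₁ : μ₃ ≤ μ₁) (h₂ : μ₃ ≤ μ₂) (h₃ : 0 ≤ μ₃)
    {F : ℕ → ℝ} (hF : SqSum μ₁ F) :
    Summable fun q : ℕ × ℕ => poissonPMF₂ μ₁ μ₂ μ₃ q.1 q.2 * F q.1 ^ 2 := by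
  have h0 := poissonPMF₂_nonneg h₁ h₂ h₃
  refine (summable_prod_of_nonneg fun q => mul_nonneg (h0 q.1 q.2) (sq_nonneg (F q.1))).2
    ⟨fun x => (poissonPMF₂_hasSum μ₁ μ₂ μ₃ x).summable.mul_right (F x ^ 2), hF.congr fun x => ?_⟩
  change _ = ∑' y, poissonPMF₂ μ₁ μ₂ μ₃ x y * F x ^ 2
  rw [tsum_mul_right, (poissonPMF₂_hasSum μ₁ μ₂ μ₃ x).tsum_eq]

lemma summable_poissonPMF₂_sq' {μ₁ μ₂ μ₃ : ℝ} (h₁ : μ₃ ≤ μ₁) (h₂ : μ₃ ≤ μ₂) (h₃ : 0 ≤ μ₃)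
    {G : ℕ → ℝ} (hG : SqSum μ₂ G) :
    Summable fun q : ℕ × ℕ => poissonPMF₂ μ₁ μ₂ μ₃ q.1 q.2 * G q.2 ^ 2 := by
  refine (summable_poissonPMF₂_sq h₂ h₁ h₃ hG).prod_symm.congr fun q => ?_
  rw [poissonPMF₂_comm]; rfl

lemma summable_poissonPMF₂_mul {μ₁ μ₂ μ₃ : ℝ} (h₁ : μ₃ ≤ μ₁) (h₂ : μ₃ ≤ μ₂) (h₃ : 0 ≤ μ₃)
    {F G : ℕ → ℝ} (hF : SqSum μ₁ F) (hG : SqSum μ₂ G) :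
    Summable fun q : ℕ × ℕ => poissonPMF₂ μ₁ μ₂ μ₃ q.1 q.2 * F q.1 * G q.2 := by
  refine Summable.of_norm_bounded ((summable_poissonPMF₂_sq h₁ h₂ h₃ hF).add
    (summable_poissonPMF₂_sq' h₁ h₂ h₃ hG)) fun q => ?_
  have h := poissonPMF₂_nonneg h₁ h₂ h₃ q.1 q.2
  rw [Real.norm_eq_abs, mul_assoc, abs_mul, abs_of_nonneg h, ← mul_add]
  refine mul_le_mul_of_nonneg_left ?_ h
  rw [abs_le]
  constructor <;> nlinarith [sq_nonneg (F q.1 + G q.2), sq_nonneg (F q.1 - G q.2),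
    sq_nonneg (F q.1), sq_nonneg (G q.2)]

/-- Conditional expectation acts diagonally on Charlier polynomials:
`E[P_k(Y; μ₂) | X = x] = (μ₃ / μ₁)^k P_k(x; μ₁)`, here multiplied by `p(x; μ₁)`. -/
lemma tsum_poissonPMF₂_mul_charlier {μ₁ μ₂ μ₃ : ℝ} (h₁ : 0 < μ₁) (h₂ : 0 < μ₂) (h₃ : 0 ≤ μ₃)
    (h₁₃ : μ₃ ≤ μ₁) (h₂₃ : μ₃ ≤ μ₂) (k x : ℕ) :
    ∑' y, poissonPMF₂ μ₁ μ₂ μ₃ x y * charlier μ₂ k y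
      = (μ₃ / μ₁) ^ k * (poissonPMF μ₁ x * charlier μ₁ k x) := by
  have hs : ∀ k x, Summable fun y => poissonPMF₂ μ₁ μ₂ μ₃ x y * charlier μ₂ k y := fun k x => by
    have h1 : SqSum μ₁ fun _ => 1 := by simpa [SqSum] using (poissonPMF_hasSum μ₁).summable
    simpa using (summable_poissonPMF₂_mul h₁₃ h₂₃ h₃ h1 (sqSum_charlier h₂.le μ₂ k)).prod_factor x
  induction k generalizing x with
  | zero => simp [charlier_zero, (poissonPMF₂_hasSum μ₁ μ₂ μ₃ x).tsum_eq]
  | succ k ih =>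
    -- The value at `x - 1`, read as `0` when `x = 0`.
    have hB : HasSum (fun y => (if x = 0 then 0 else poissonPMF₂ μ₁ μ₂ μ₃ (x - 1) y) *
        charlier μ₂ k y) ((μ₃ / μ₁) ^ k * (x / μ₁ * poissonPMF μ₁ x * charlier μ₁ k (x - 1))) := by
      cases x with
      | zero => simp
      | succ x =>
        have := (hs k x).hasSum
        rw [ih] at this
        have e : ((x + 1 : ℕ) : ℝ) / μ₁ * poissonPMF μ₁ (x + 1) = poissonPMF μ₁ x := by
          have := poissonPMF_succ μ₁ x
          push_cast
          field_simp
          linear_combination this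
        rw [e]
        simpa using this
    have hA := (hs k x).hasSum
    rw [ih] at hA
    have h1 : ∀ y : ℕ, poissonPMF₂ μ₁ μ₂ μ₃ x (y + 1) *
        (((y + 1 : ℕ) : ℝ) * charlier μ₂ k (y + 1 - 1))
        = (μ₂ - μ₃) * (poissonPMF₂ μ₁ μ₂ μ₃ x y * charlier μ₂ k y)
          + μ₃ * ((if x = 0 then 0 else poissonPMF₂ μ₁ μ₂ μ₃ (x - 1) y) * charlier μ₂ k y) :=
      fun y => by
        have := poissonPMF₂_succ μ₁ μ₂ μ₃ x y
        rw [Nat.add_sub_cancel]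
        push_cast
        linear_combination charlier μ₂ k y * this
    have hC := (hA.mul_left (μ₂ - μ₃)).add (hB.mul_left μ₃)
    simp only [← h1] at hC
    have hD := (hasSum_nat_add_iff (f := fun y : ℕ => poissonPMF₂ μ₁ μ₂ μ₃ x y *
      ((y : ℝ) * charlier μ₂ k (y - 1))) 1).1 hC
    have hE := hD.sub (hA.mul_left μ₂)
    have e : ∀ y, poissonPMF₂ μ₁ μ₂ μ₃ x y * charlier μ₂ (k + 1) y
        = poissonPMF₂ μ₁ μ₂ μ₃ x y * ((y : ℝ) * charlier μ₂ k (y - 1))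
          - μ₂ * (poissonPMF₂ μ₁ μ₂ μ₃ x y * charlier μ₂ k y) := fun y => by
      rw [charlier_succ]; ring
    rw [tsum_congr e, hE.tsum_eq, charlier_succ, pow_succ]
    simp
    field_simp
    ring

/-- The conditional expectation `y ↦ E[F(X) | Y = y]` under the bivariate Poisson law. -/
noncomputable def condExpPMF (μ₁ μ₂ μ₃ : ℝ) (F : ℕ → ℝ) (y : ℕ) : ℝ :=
  (∑' x, poissonPMF₂ μ₁ μ₂ μ₃ x y * F x) / poissonPMF μ₂ y

lemma poissonPMF_mul_condExpPMF {μ₂ : ℝ} (h₂ : 0 < μ₂) (μ₁ μ₃ : ℝ) (F : ℕ → ℝ) (y : ℕ) :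
    poissonPMF μ₂ y * condExpPMF μ₁ μ₂ μ₃ F y = ∑' x, poissonPMF₂ μ₁ μ₂ μ₃ x y * F x :=
  mul_div_cancel₀ _ (poissonPMF_pos h₂ y).ne'

lemma summable_poissonPMF₂_fiber {μ₁ μ₂ μ₃ : ℝ} (h₃ : 0 ≤ μ₃) (h₁₃ : μ₃ ≤ μ₁) (h₂₃ : μ₃ ≤ μ₂)
    {F : ℕ → ℝ} (hF : SqSum μ₁ F) (y : ℕ) :
    Summable fun x => poissonPMF₂ μ₁ μ₂ μ₃ x y * F x := by
  have h1 : SqSum μ₂ fun _ => 1 := by simpa [SqSum] using (poissonPMF_hasSum μ₂).summable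
  simpa using (summable_poissonPMF₂_mul h₁₃ h₂₃ h₃ hF h1).prod_symm.prod_factor y

/-- Conditional expectation preserves square-summability, by conditional Jensen. -/
lemma sqSum_condExpPMF {μ₁ μ₂ μ₃ : ℝ} (h₂ : 0 < μ₂) (h₃ : 0 ≤ μ₃) (h₁₃ : μ₃ ≤ μ₁)
    (h₂₃ : μ₃ ≤ μ₂) {F : ℕ → ℝ} (hF : SqSum μ₁ F) : SqSum μ₂ (condExpPMF μ₁ μ₂ μ₃ F) := by
  have hQ := (summable_poissonPMF₂_sq h₁₃ h₂₃ h₃ hF).prod_symm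
  refine Summable.of_nonneg_of_le (fun y => mul_nonneg (poissonPMF_nonneg h₂.le y) (sq_nonneg _))
    (fun y => ?_) hQ.prod
  -- With `c` the conditional mean, expand `0 ≤ ∑ₓ p(x, y) (F x - c)²`.
  set c := condExpPMF μ₁ μ₂ μ₃ F y with hc
  have hS := (summable_poissonPMF₂_fiber h₃ h₁₃ h₂₃ hF y).hasSum
  rw [← poissonPMF_mul_condExpPMF h₂, ← hc] at hS
  have hQy := (hQ.prod_factor y).hasSum
  have hpos : ∀ x, 0 ≤ poissonPMF₂ μ₁ μ₂ μ₃ x y * (F x - c) ^ 2 := fun x =>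
    mul_nonneg (poissonPMF₂_nonneg h₁₃ h₂₃ h₃ x y) (sq_nonneg _)
  have e : (fun x => poissonPMF₂ μ₁ μ₂ μ₃ x y * (F x - c) ^ 2) = fun x =>
      poissonPMF₂ μ₁ μ₂ μ₃ x y * F x ^ 2 - 2 * c * (poissonPMF₂ μ₁ μ₂ μ₃ x y * F x)
        + c ^ 2 * poissonPMF₂ μ₁ μ₂ μ₃ x y := by
    ext x; ring
  have h := ((hQy.sub (hS.mul_left (2 * c))).add
    ((poissonPMF₂_hasSum' μ₁ μ₂ μ₃ y).mul_left (c ^ 2)))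
  have h0 := (e ▸ h : HasSum (fun x => poissonPMF₂ μ₁ μ₂ μ₃ x y * (F x - c) ^ 2) _).nonneg hpos
  linarith

/-- On coefficients, conditional expectation is multiplication by `ρ^k`: the factor `(μ₃ / μ₁)^k`
of the unnormalised polynomials combines with the ratio `√(μ₁^k / μ₂^k)` of their norms. -/
lemma normCoeff_condExpPMF {μ₁ μ₂ μ₃ : ℝ} (h₁ : 0 < μ₁) (h₂ : 0 < μ₂) (h₃ : 0 ≤ μ₃)
    (h₁₃ : μ₃ ≤ μ₁) (h₂₃ : μ₃ ≤ μ₂) {F : ℕ → ℝ} (hF : SqSum μ₁ F) (k : ℕ) :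
    normCoeff μ₂ (condExpPMF μ₁ μ₂ μ₃ F) k = (μ₃ / √(μ₁ * μ₂)) ^ k * normCoeff μ₁ F k := by
  have hs := summable_poissonPMF₂_mul h₁₃ h₂₃ h₃ hF (sqSum_charlier h₂.le μ₂ k)
  have h : ∑' y, poissonPMF μ₂ y * condExpPMF μ₁ μ₂ μ₃ F y * charlier μ₂ k y
      = (μ₃ / μ₁) ^ k * ∑' x, poissonPMF μ₁ x * F x * charlier μ₁ k x := by
    calc _ = ∑' y, ∑' x, poissonPMF₂ μ₁ μ₂ μ₃ x y * F x * charlier μ₂ k y :=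
          tsum_congr fun y => by rw [poissonPMF_mul_condExpPMF h₂, tsum_mul_right]
      _ = ∑' x, ∑' y, poissonPMF₂ μ₁ μ₂ μ₃ x y * F x * charlier μ₂ k y :=
          Summable.tsum_comm
            (f := fun x y => poissonPMF₂ μ₁ μ₂ μ₃ x y * F x * charlier μ₂ k y) hs
      _ = ∑' x, (μ₃ / μ₁) ^ k * (poissonPMF μ₁ x * F x * charlier μ₁ k x) :=
          tsum_congr fun x => by
            calc _ = ∑' y, F x * (poissonPMF₂ μ₁ μ₂ μ₃ x y * charlier μ₂ k y) :=
                  tsum_congr fun y => by ring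
              _ = _ := by
                rw [tsum_mul_left, tsum_poissonPMF₂_mul_charlier h₁ h₂ h₃ h₁₃ h₂₃]; ring
      _ = _ := tsum_mul_left
  have hm₁ := Real.sqrt_pos.2 h₁
  have hm₂ := Real.sqrt_pos.2 h₂
  have hf : 0 < √(k.factorial : ℝ) := Real.sqrt_pos.2 (by positivity)
  have hsq : √μ₁ * √μ₁ = μ₁ := Real.mul_self_sqrt h₁.le
  have hpow : ∀ a : ℝ, 0 ≤ a → √(a ^ k) = √a ^ k := fun a ha => by
    rw [Real.sqrt_eq_iff_mul_self_eq (by positivity) (by positivity), ← mul_pow,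
      Real.mul_self_sqrt ha]
  have e : (μ₃ / μ₁) ^ k / √μ₂ ^ k = (μ₃ / (√μ₁ * √μ₂)) ^ k / √μ₁ ^ k := by
    rw [← div_pow, ← div_pow]
    congr 1
    nth_rewrite 1 [← hsq]
    field_simp
  rw [normCoeff, normCoeff, h, Real.sqrt_mul h₁.le, Real.sqrt_mul (Nat.cast_nonneg k.factorial),
    Real.sqrt_mul (Nat.cast_nonneg k.factorial), hpow _ h₁.le, hpow _ h₂.le]
  set T := ∑' x, poissonPMF μ₁ x * F x * charlier μ₁ k x
  calc _ = (μ₃ / μ₁) ^ k / √μ₂ ^ k * (T / √(k.factorial : ℝ)) := by field_simp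
    _ = _ := by rw [e]; field_simp

/-- Mehler-type expansion of the bivariate Poisson mean of `F(X) G(Y)` in Charlier coefficients. -/
lemma hasSum_poissonPMF₂ {μ₁ μ₂ μ₃ : ℝ} (h₁ : 0 < μ₁) (h₂ : 0 < μ₂) (h₃ : 0 ≤ μ₃)
    (h₁₃ : μ₃ ≤ μ₁) (h₂₃ : μ₃ ≤ μ₂) {F G : ℕ → ℝ} (hF : SqSum μ₁ F) (hG : SqSum μ₂ G) :
    HasSum (fun k => (μ₃ / √(μ₁ * μ₂)) ^ k * (normCoeff μ₁ F k * normCoeff μ₂ G k))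
      (∑' q : ℕ × ℕ, poissonPMF₂ μ₁ μ₂ μ₃ q.1 q.2 * F q.1 * G q.2) := by
  have hs := summable_poissonPMF₂_mul h₁₃ h₂₃ h₃ hF hG
  have e : ∑' q : ℕ × ℕ, poissonPMF₂ μ₁ μ₂ μ₃ q.1 q.2 * F q.1 * G q.2
      = ∑' y, poissonPMF μ₂ y * condExpPMF μ₁ μ₂ μ₃ F y * G y := by
    calc _ = ∑' x, ∑' y, poissonPMF₂ μ₁ μ₂ μ₃ x y * F x * G y := hs.tsum_prod
      _ = ∑' y, ∑' x, poissonPMF₂ μ₁ μ₂ μ₃ x y * F x * G y :=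
          (Summable.tsum_comm (f := fun x y => poissonPMF₂ μ₁ μ₂ μ₃ x y * F x * G y) hs).symm
      _ = _ := tsum_congr fun y => by rw [poissonPMF_mul_condExpPMF h₂, tsum_mul_right]
  rw [e]
  simpa only [normCoeff_condExpPMF h₁ h₂ h₃ h₁₃ h₂₃ hF, mul_assoc] using
    parseval h₂ (sqSum_condExpPMF h₂ h₃ h₁₃ h₂₃ hF) hG

/-! ### The covariance bound -/

lemma normCoeff_zero (μ : ℝ) (G : ℕ → ℝ) :
    normCoeff μ G 0 = ∑' x, poissonPMF μ x * G x := by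
  simp [normCoeff, charlier_zero]

lemma normCoeff_eq_zero {μ : ℝ} (hμ : 0 < μ) {G : ℕ → ℝ} {k : ℕ} (h : charlierCoeff μ G k = 0) :
    normCoeff μ G k = 0 := by
  rw [charlierCoeff, mul_eq_zero] at h
  rw [normCoeff, h.resolve_left (by positivity), zero_div]

/-- Parseval with the constant term removed: the variance is the sum of the squared coefficients of
positive degree. -/
lemma hasSum_variance {μ : ℝ} (hμ : 0 < μ) {G : ℕ → ℝ} (hG : SqSum μ G) :
    HasSum (fun k => normCoeff μ G (k + 1) ^ 2)
      ((∑' x, poissonPMF μ x * G x ^ 2) - (∑' x, poissonPMF μ x * G x) ^ 2) := by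
  have h := (hasSum_nat_add_iff' 1).2 (parseval hμ hG hG)
  simpa only [Finset.sum_range_one, normCoeff_zero, ← pow_two, mul_assoc] using h

/-- covariance bound in terms of the correlation coefficient
`ρ = μ₃ / √(μ₁ μ₂)` and the Charlier rank. -/
theorem covariance_correlation_bound (μ₁ μ₂ μ₃ : ℝ) (h₁ : 0 < μ₁) (h₂ : 0 < μ₂)
    (h₃ : 0 ≤ μ₃) (h₃' : μ₃ < min μ₁ μ₂) (G₁ G₂ : ℕ → ℝ)
    (hG₁ : Summable (fun x : ℕ => poissonPMF μ₁ x * (G₁ x) ^ 2))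
    (hG₂ : Summable (fun x : ℕ => poissonPMF μ₂ x * (G₂ x) ^ 2))
    (kstar : ℕ) (hkstar : 1 ≤ kstar)
    (hvanish : ∀ k : ℕ, 1 ≤ k → k < kstar →
      charlierCoeff μ₁ G₁ k * charlierCoeff μ₂ G₂ k = 0) :
    |(∑' q : ℕ × ℕ, poissonPMF₂ μ₁ μ₂ μ₃ q.1 q.2 * G₁ q.1 * G₂ q.2)
        - (∑' x : ℕ, poissonPMF μ₁ x * G₁ x) * (∑' y : ℕ, poissonPMF μ₂ y * G₂ y)|
      ≤ (μ₃ / Real.sqrt (μ₁ * μ₂)) ^ kstar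
        * Real.sqrt
            (((∑' x : ℕ, poissonPMF μ₁ x * (G₁ x) ^ 2)
                - (∑' x : ℕ, poissonPMF μ₁ x * G₁ x) ^ 2)
              * ((∑' y : ℕ, poissonPMF μ₂ y * (G₂ y) ^ 2)
                - (∑' y : ℕ, poissonPMF μ₂ y * G₂ y) ^ 2)) := by
  have h₁₃ : μ₃ ≤ μ₁ := h₃'.le.trans (min_le_left _ _)
  have h₂₃ : μ₃ ≤ μ₂ := h₃'.le.trans (min_le_right _ _)
  have hexp := (hasSum_nat_add_iff' 1).2 (hasSum_poissonPMF₂ h₁ h₂ h₃ h₁₃ h₂₃ hG₁ hG₂)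
  have hA := hasSum_variance h₁ hG₁
  have hB := hasSum_variance h₂ hG₂
  simp only [Finset.sum_range_one, pow_zero, one_mul, normCoeff_zero] at hexp
  set ρ := μ₃ / √(μ₁ * μ₂) with hρ
  have hρ0 : 0 ≤ ρ := div_nonneg h₃ (Real.sqrt_nonneg _)
  have hρ1 : ρ ≤ 1 := div_le_one_of_le₀ (Real.le_sqrt_of_sq_le (by nlinarith)) (Real.sqrt_nonneg _)
  set a := normCoeff μ₁ G₁
  set b := normCoeff μ₂ G₂
  set A := (∑' x : ℕ, poissonPMF μ₁ x * (G₁ x) ^ 2) - (∑' x : ℕ, poissonPMF μ₁ x * G₁ x) ^ 2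
  set B := (∑' y : ℕ, poissonPMF μ₂ y * (G₂ y) ^ 2) - (∑' y : ℕ, poissonPMF μ₂ y * G₂ y) ^ 2
  have hA0 : 0 ≤ A := hA.nonneg fun _ => sq_nonneg _
  have hterm : ∀ k, |ρ ^ (k + 1) * (a (k + 1) * b (k + 1))|
      ≤ ρ ^ kstar * (|a (k + 1)| * |b (k + 1)|) := fun k => by
    rw [abs_mul, abs_mul, abs_of_nonneg (pow_nonneg hρ0 _)]
    rcases lt_or_ge (k + 1) kstar with hk | hk
    · -- Below `kstar` one of the two coefficients vanishes.
      rcases mul_eq_zero.1 (hvanish (k + 1) (by omega) hk) with h | h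
      · simp [a, normCoeff_eq_zero h₁ h]
      · simp [b, normCoeff_eq_zero h₂ h]
    · exact mul_le_mul_of_nonneg_right (pow_le_pow_of_le_one hρ0 hρ1 hk) (by positivity)
  rw [Real.sqrt_mul hA0]
  refine le_of_tendsto (hexp.abs) (Eventually.of_forall fun s => ?_)
  calc _ ≤ ∑ k ∈ s, |ρ ^ (k + 1) * (a (k + 1) * b (k + 1))| := Finset.abs_sum_le_sum_abs _ _
    _ ≤ ∑ k ∈ s, ρ ^ kstar * (|a (k + 1)| * |b (k + 1)|) := Finset.sum_le_sum fun k _ => hterm k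
    _ = ρ ^ kstar * ∑ k ∈ s, |a (k + 1)| * |b (k + 1)| := (Finset.mul_sum _ _ _).symm
    _ ≤ ρ ^ kstar * (√(∑ k ∈ s, a (k + 1) ^ 2) * √(∑ k ∈ s, b (k + 1) ^ 2)) := by
        refine mul_le_mul_of_nonneg_left ?_ (pow_nonneg hρ0 _)
        simpa only [sq_abs] using Real.sum_mul_le_sqrt_mul_sqrt s
          (fun k => |a (k + 1)|) (fun k => |b (k + 1)|)
    _ ≤ ρ ^ kstar * (√A * √B) := by
        gcongr
        · exact sum_le_hasSum s (fun _ _ => sq_nonneg _) hA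
        · exact sum_le_hasSum s (fun _ _ => sq_nonneg _) hB
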